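/- Let E = (r_1, …, r_n) be a finite sequence of rows with all entries integers whose B-coordinates are nondecreasing (B_1 ≤ B_2 ≤ … ≤ B_n), and suppose for some index i that h_1 := r_i = (A, −B, B, η) and h_2 := r_{i+1} = (A', −B', B', η') are consecutive hats with B' ≥ 0, C(h_1) ≥ 1, C(h_2) ≥ 1, satisfying A' = B − 1 and η' = (−1)^{C(h_1)} η (the alternating sign condition). Then: (a) in dual(E), the rows r̂_{i+1} and r̂_i are consecutive (in that order) rows with l = 0 and supports [B', A'] and [B, A] respectively, and the union-intersection of type 3' is applicable to this pair; (b) applying this union-intersection to dual(E) and then taking the dual of the resulting sequence yields exactly the sequence obtained from E by replacing the pair (h_1, h_2) with the single hat h = (A, −B', B', η), with every other row of E unchanged. -/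

import Mathlib

/-- A row `r = (A, B, l, η)`: the data of an extended segment `([A, B], l, η)`
(with the constraints `B ≤ A` and `η ∈ {1, -1}` imposed as hypotheses via
`IsRow`). All entries are integers. -/
structure Row where
  A : ℤ
  B : ℤ
  l : ℤ
  eta : ℤ
deriving DecidableEq

instance : Inhabited Row := ⟨⟨0, 0, 0, 1⟩⟩

/-- `(-1)^n` for an integer `n` (only the parity of `n` matters). -/
def epow (n : ℤ) : ℤ := (-1) ^ n.natAbs

/-- `a(r) = A + B + 1`. -/
def Row.a (r : Row) : ℤ := r.A + r.B + 1

/-- `b(r) = A - B + 1`. -/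
def Row.b (r : Row) : ℤ := r.A - r.B + 1

/-- `C(r) = b(r) - 2l(r)`, the number of circles of `r`. -/
def Row.C (r : Row) : ℤ := r.b - 2 * r.l

/-- The defining constraints on a row: `B ≤ A` and `η ∈ {1, -1}`. -/
def IsRow (r : Row) : Prop := r.B ≤ r.A ∧ (r.eta = 1 ∨ r.eta = -1)

/-- `C(E) = Σ_j C(r_j)` for a sequence of rows `E`. -/
def CE (E : List Row) : ℤ := (E.map Row.C).sum

/-- `α_i = Σ_{j < i} a(r_j)` (the list `E` is 0-indexed here). -/
def alphaSum (E : List Row) (i : ℕ) : ℤ := ((E.take i).map Row.a).sum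

/-- `β_i = Σ_{j > i} b(r_j)` (the list `E` is 0-indexed here). -/
def betaSum (E : List Row) (i : ℕ) : ℤ := ((E.drop (i + 1)).map Row.b).sum

/-- The dual `r̂_i = (A_i, −B_i, l_i + B_i, (−1)^{α_i+β_i} η_i)` of the `i`-th
row of `E`. -/
def dualRow (E : List Row) (i : ℕ) : Row :=
  let r := E.getD i default
  ⟨r.A, -r.B, r.l + r.B, epow (alphaSum E i + betaSum E i) * r.eta⟩

/-- The dual sequence `dual(E) = (r̂_n, …, r̂_1)`. -/
def dualList (E : List Row) : List Row :=
  ((List.range E.length).map (dualRow E)).reverse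

/-!
Up to signs, duality reverses the sequence and reflects each row, `(A, B, l) ↦ (A, -B, l + B)`.
The sign of a row is twisted by `(-1)^s`, where `s` collects the `a`'s before it and the `b`'s after
it. Hence the dual of `E ++ F` is `dual F` followed by `dual E`, with `dual F` twisted by the sum of
the `a`'s of `E`, and `dual E` by the sum of the `b`'s of `F`. Since reflection exchanges `a` and
`b`, the two twists cancel when dualizing twice, so that duality is an involution.

It therefore suffices to see that the dual of the sequence with the merged hat `h` is the
union-intersection of `dual E`. When `A' = B - 1`, we have `a(h) = a(h₁) + a(h₂)`, whereas
`b(h) = b(h₁) + b(h₂) - 2B` has the same parity as `b(h₁) + b(h₂)`, so no other row changes its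
sign; the alternating sign condition takes care of the merged row.
-/

theorem epow_eq_negOnePow (n : ℤ) : epow n = n.negOnePow := by
  rcases Int.even_or_odd n with hn | hn
  · rw [epow, (Int.natAbs_even.2 hn).neg_one_pow, Int.negOnePow_even n hn, Units.val_one]
  · rw [epow, (Int.natAbs_odd.2 hn).neg_one_pow, Int.negOnePow_odd n hn, Units.val_neg,
      Units.val_one]

theorem epow_add (m n : ℤ) : epow (m + n) = epow m * epow n := by
  simp only [epow_eq_negOnePow, Int.negOnePow_add, Units.val_mul]

theorem epow_of_even {n : ℤ} (hn : Even n) : epow n = 1 := by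
  rw [epow_eq_negOnePow, Int.negOnePow_even n hn, Units.val_one]

theorem epow_of_odd {n : ℤ} (hn : Odd n) : epow n = -1 := by
  rw [epow_eq_negOnePow, Int.negOnePow_odd n hn, Units.val_neg, Units.val_one]

theorem epow_eq_epow_of_even_sub {m n : ℤ} (h : Even (m - n)) : epow m = epow n := by
  rw [epow_eq_negOnePow, epow_eq_negOnePow, (Int.negOnePow_eq_iff m n).2 h]

namespace Row

/-- The dual of a row regarded as a one-row sequence: the dual `r̂` without its sign twist. -/
def dual (r : Row) : Row := ⟨r.A, -r.B, r.l + r.B, r.eta⟩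

/-- Multiplication of the sign of a row by `(-1)^s`. -/
def twist (s : ℤ) (r : Row) : Row := { r with eta := epow s * r.eta }

/-- The hat with support `[-B, A]`, that is, with `l = B`. -/
def hat (A B η : ℤ) : Row := ⟨A, -B, B, η⟩

/-- The conditions under which the union-intersection of type 3' applies to the consecutive rows
`s`, `t`. -/
structure UnionIntersectable (s t : Row) : Prop where
  A_lt : s.A < t.A
  B_lt : s.B < t.B
  l_left : s.l = 0
  l_right : t.l = 0
  sign : epow (s.A - s.B) * s.eta * t.eta = -1
  adjacent : t.B = s.A + 1

/-- The row replacing `s`, `t` in the union-intersection of type 3'; meaningful only if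
`UnionIntersectable s t`. -/
def unionIntersection (s t : Row) : Row := ⟨t.A, s.B, 0, s.eta⟩

theorem dual_dual (r : Row) : r.dual.dual = r := by
  simp [dual]

theorem a_dual (r : Row) : r.dual.a = r.b := by
  simp only [dual, a, b]; ring

theorem b_dual (r : Row) : r.dual.b = r.a := by
  simp only [dual, a, b]; ring

theorem a_comp_twist (s : ℤ) : a ∘ twist s = a := rfl

theorem b_comp_twist (s : ℤ) : b ∘ twist s = b := rfl

theorem a_twist (s : ℤ) (r : Row) : (r.twist s).a = r.a := rfl

theorem b_twist (s : ℤ) (r : Row) : (r.twist s).b = r.b := rfl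

theorem dual_twist (s : ℤ) (r : Row) : (r.twist s).dual = r.dual.twist s := rfl

theorem twist_twist (s t : ℤ) (r : Row) : (r.twist t).twist s = r.twist (s + t) := by
  rw [twist, twist, twist, epow_add, mul_assoc]

theorem twist_comp_twist (s t : ℤ) : twist s ∘ twist t = twist (s + t) :=
  funext (twist_twist s t)

theorem twist_eq_twist_of_even_sub {s t : ℤ} (h : Even (s - t)) : twist s = twist t := by
  funext r
  rw [twist, twist, epow_eq_epow_of_even_sub h]

theorem twist_of_even {s : ℤ} (hs : Even s) : twist s = id := by
  funext r
  rw [twist, epow_of_even hs, one_mul, id]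

end Row

open Row

theorem dualRow_eq_twist_dual (E : List Row) {i : ℕ} (hi : i < E.length) :
    dualRow E i = E[i].dual.twist (alphaSum E i + betaSum E i) := by
  rw [dualRow, List.getD_eq_getElem _ _ hi]; rfl

theorem alphaSum_succ (E : List Row) {i : ℕ} (hi : i < E.length) :
    alphaSum E (i + 1) = alphaSum E i + E[i].a := by
  rw [alphaSum, ← List.take_append_getElem hi, List.map_append, List.sum_append, alphaSum,
    List.map_singleton, List.sum_singleton]

theorem sum_map_b_drop (E : List Row) {i : ℕ} (hi : i < E.length) :
    ((E.drop i).map Row.b).sum = E[i].b + betaSum E i := by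
  rw [List.drop_eq_getElem_cons hi, List.map_cons, List.sum_cons, betaSum]

theorem dualRow_append_left (E F : List Row) {i : ℕ} (hi : i < E.length) :
    dualRow (E ++ F) i = (dualRow E i).twist (F.map Row.b).sum := by
  have hα : alphaSum (E ++ F) i = alphaSum E i := by
    rw [alphaSum, List.take_append_of_le_length hi.le, alphaSum]
  have hβ : betaSum (E ++ F) i = betaSum E i + (F.map Row.b).sum := by
    rw [betaSum, List.drop_append_of_le_length hi, List.map_append, List.sum_append, betaSum]
  rw [dualRow_eq_twist_dual _ (hi.trans_le (by simp)), dualRow_eq_twist_dual _ hi, twist_twist,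
    List.getElem_append_left hi, hα, hβ]
  congr 1
  ring

theorem dualRow_append_right (E F : List Row) {i : ℕ} (hi : i < F.length) :
    dualRow (E ++ F) (E.length + i) = (dualRow F i).twist (E.map Row.a).sum := by
  have hα : alphaSum (E ++ F) (E.length + i) = (E.map Row.a).sum + alphaSum F i := by
    rw [alphaSum, List.take_length_add_append, List.map_append, List.sum_append, alphaSum]
  have hβ : betaSum (E ++ F) (E.length + i) = betaSum F i := by
    rw [betaSum, add_assoc, List.drop_length_add_append, betaSum]
  rw [dualRow_eq_twist_dual _ (by simpa using hi), dualRow_eq_twist_dual _ hi, twist_twist, hα, hβ,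
    add_assoc]
  simp

theorem length_dualList (E : List Row) : (dualList E).length = E.length := by
  simp [dualList]

theorem getD_dualList (E : List Row) {i : ℕ} (hi : i < E.length) :
    (dualList E).getD (E.length - (i + 1)) default = dualRow E i := by
  have hrev : E.length - 1 - (E.length - (i + 1)) = i := by lia
  rw [List.getD_eq_getElem _ _ (by rw [length_dualList]; lia)]
  simp [dualList, hrev]

theorem dualList_append (E F : List Row) :
    dualList (E ++ F) = (dualList F).map (twist (E.map Row.a).sum) ++
      (dualList E).map (twist (F.map Row.b).sum) := by
  simp only [dualList, List.length_append, List.range_add, List.map_append, List.reverse_append,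
    List.map_reverse, List.map_map]
  congr 2
  · exact List.map_congr_left fun i hi => dualRow_append_right E F (List.mem_range.1 hi)
  · exact List.map_congr_left fun i hi => dualRow_append_left E F (List.mem_range.1 hi)

theorem dualList_singleton (r : Row) : dualList [r] = [r.dual] := by
  simp [dualList, dualRow, alphaSum, betaSum, epow, dual]

theorem dualList_cons (r : Row) (E : List Row) :
    dualList (r :: E) = (dualList E).map (twist r.a) ++ [r.dual.twist (E.map Row.b).sum] := by
  simpa [dualList_singleton] using dualList_append [r] E

theorem dualList_append_singleton_append (P Q : List Row) (r : Row) :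
    dualList (P ++ [r] ++ Q) = (dualList Q).map (twist ((P.map Row.a).sum + r.a)) ++
      [r.dual.twist ((P.map Row.a).sum + (Q.map Row.b).sum)] ++
      (dualList P).map (twist (r.b + (Q.map Row.b).sum)) := by
  rw [List.append_assoc, dualList_append P, List.singleton_append, dualList_cons]
  simp [twist_twist, twist_comp_twist]

theorem take_dualList (E : List Row) (i : ℕ) :
    (dualList E).take (E.length - i) = (dualList (E.drop i)).map (twist (alphaSum E i)) := by
  conv_lhs => rw [← List.take_append_drop i E, dualList_append]
  exact List.take_left' (by simp [length_dualList])

theorem drop_dualList (E : List Row) (i : ℕ) :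
    (dualList E).drop (E.length - i) =
      (dualList (E.take i)).map (twist ((E.drop i).map Row.b).sum) := by
  conv_lhs => rw [← List.take_append_drop i E, dualList_append]
  exact List.drop_left' (by simp [length_dualList])

theorem dualList_map_twist (s : ℤ) (E : List Row) :
    dualList (E.map (twist s)) = (dualList E).map (twist s) := by
  induction E with
  | nil => rfl
  | cons r E ih =>
    simp [dualList_cons, ih, a_twist, b_comp_twist, dual_twist, twist_twist, twist_comp_twist,
      add_comm]

theorem sum_map_a_dualList (E : List Row) :
    ((dualList E).map Row.a).sum = (E.map Row.b).sum := by
  induction E with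
  | nil => rfl
  | cons r E ih =>
    simp [dualList_cons, a_comp_twist, a_twist, a_dual, ih, add_comm]

theorem dualList_dualList (E : List Row) : dualList (dualList E) = E := by
  induction E with
  | nil => rfl
  | cons r E ih =>
    have hhead : (r.dual.twist (E.map Row.b).sum).dual.twist
        (((dualList E).map (twist r.a)).map Row.a).sum = r := by
      rw [List.map_map, a_comp_twist, sum_map_a_dualList, dual_twist, dual_dual, twist_twist,
        twist_of_even (Even.add_self _), id]
    have htail : (dualList ((dualList E).map (twist r.a))).map
        (twist (r.dual.twist (E.map Row.b).sum).b) = E := by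
      rw [dualList_map_twist, ih, b_twist, b_dual, List.map_map, twist_comp_twist,
        twist_of_even (Even.add_self _), List.map_id]
    rw [dualList_cons, dualList_append, dualList_singleton, List.map_singleton, hhead,
      List.map_singleton, List.sum_singleton, htail, List.singleton_append]

section Hats

variable {A B B' η : ℤ}

theorem twist_dual_hat (s : ℤ) : (hat A B η).dual.twist s = ⟨A, B, 0, epow s * η⟩ := by
  simp [twist, dual, hat]

theorem C_hat : (hat A B η).C = (hat A B η).a := by
  simp only [hat, C, a, b]; ring

theorem epow_add_a_hat_mul_epow_C_hat (c : ℤ) :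
    epow (c + (hat A B η).a) * epow (hat A B η).C = epow c := by
  rw [C_hat, epow_add, mul_assoc, ← epow_add, epow_of_even (Even.add_self _), mul_one]

theorem unionIntersectable_twist_dual_hat (c : ℤ) (hη : η = 1 ∨ η = -1)
    (hC₁ : 1 ≤ (hat A B η).C) (hC₂ : 1 ≤ (hat (B - 1) B' (epow (hat A B η).C * η)).C) :
    UnionIntersectable
      ((hat (B - 1) B' (epow (hat A B η).C * η)).dual.twist (c + (hat A B η).a))
      ((hat A B η).dual.twist (c + (hat (B - 1) B' (epow (hat A B η).C * η)).b)) := by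
  rw [twist_dual_hat, twist_dual_hat, ← mul_assoc, epow_add_a_hat_mul_epow_C_hat]
  simp only [hat, C, b] at hC₁ hC₂ ⊢
  constructor <;> dsimp only
  case sign =>
    have hηη : η * η = 1 := Int.isUnit_mul_self (Int.isUnit_iff.2 hη)
    have hodd : Odd ((B - 1 - B') + c + (c + (B - 1 - -B' + 1))) := ⟨B - 1 + c, by ring⟩
    calc epow (B - 1 - B') * (epow c * η) * (epow (c + (B - 1 - -B' + 1)) * η)
        = epow (B - 1 - B') * epow c * epow (c + (B - 1 - -B' + 1)) * (η * η) := by ring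
      _ = -1 := by rw [← epow_add, ← epow_add, epow_of_odd hodd, hηη, mul_one]
  all_goals lia

theorem unionIntersection_twist_dual_hat (A' c t : ℤ) :
    unionIntersection ((hat A' B' (epow (hat A B η).C * η)).dual.twist (c + (hat A B η).a))
      ((hat A B η).dual.twist t) = (hat A B' η).dual.twist c := by
  rw [twist_dual_hat, twist_dual_hat, twist_dual_hat, unionIntersection, ← mul_assoc,
    epow_add_a_hat_mul_epow_C_hat]

end Hats

section ConsecutiveRows

variable {E : List Row} {i : ℕ} (hi : i + 1 < E.length)

theorem dualRow_eq_twist_of_succ_lt :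
    dualRow E i =
      (E[i]'(Nat.lt_of_succ_lt hi)).dual.twist (alphaSum E i + betaSum E (i + 1) + E[i + 1].b) := by
  rw [dualRow_eq_twist_dual E (by lia), betaSum, sum_map_b_drop E hi]
  congr 1
  ring

theorem dualRow_succ_eq_twist :
    dualRow E (i + 1) =
      E[i + 1].dual.twist (alphaSum E i + betaSum E (i + 1) + (E[i]'(Nat.lt_of_succ_lt hi)).a) := by
  rw [dualRow_eq_twist_dual E hi, alphaSum_succ E (by lia), add_right_comm]

theorem dualList_replace_pair {h : Row}
    (ha : Even ((E[i]'(Nat.lt_of_succ_lt hi)).a + E[i + 1].a - h.a))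
    (hb : Even ((E[i]'(Nat.lt_of_succ_lt hi)).b + E[i + 1].b - h.b)) :
    dualList (E.take i ++ [h] ++ E.drop (i + 2)) =
      (dualList E).take (E.length - (i + 2)) ++
        [h.dual.twist (alphaSum E i + betaSum E (i + 1))] ++
        (dualList E).drop (E.length - i) := by
  have htake : twist (alphaSum E (i + 2)) = twist (alphaSum E i + h.a) := by
    apply twist_eq_twist_of_even_sub
    rw [alphaSum_succ E hi, alphaSum_succ E (by lia)]
    convert ha using 1
    ring
  have hdrop : twist ((E.drop i).map Row.b).sum = twist (h.b + betaSum E (i + 1)) := by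
    apply twist_eq_twist_of_even_sub
    rw [sum_map_b_drop E (by lia), betaSum, sum_map_b_drop E hi]
    convert hb using 1
    ring
  rw [dualList_append_singleton_append, take_dualList, drop_dualList, htake, hdrop]
  rfl

end ConsecutiveRows

theorem merge_hats_general (E : List Row) (i : ℕ) (hi : i + 1 < E.length)
    (A B A' B' η η' : ℤ) (hh₁ : E[i]'(Nat.lt_of_succ_lt hi) = hat A B η)
    (hh₂ : E[i + 1] = hat A' B' η') (hη : η = 1 ∨ η = -1) (hC₁ : 1 ≤ (hat A B η).C)
    (hC₂ : 1 ≤ (hat A' B' η').C) (hadj : A' = B - 1) (halt : η' = epow (hat A B η).C * η) :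
    ((dualList E).getD (E.length - (i + 2)) default = dualRow E (i + 1) ∧
      (dualList E).getD (E.length - (i + 1)) default = dualRow E i ∧
      (dualRow E (i + 1)).B = B' ∧ (dualRow E (i + 1)).A = A' ∧
      (dualRow E i).B = B ∧ (dualRow E i).A = A ∧
      UnionIntersectable (dualRow E (i + 1)) (dualRow E i)) ∧
    dualList ((dualList E).take (E.length - (i + 2)) ++
        [unionIntersection (dualRow E (i + 1)) (dualRow E i)] ++
        (dualList E).drop (E.length - i)) =
      E.take i ++ [hat A B' η] ++ E.drop (i + 2) := by
  subst hadj halt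
  have hdual₁ := dualRow_eq_twist_of_succ_lt hi
  have hdual₂ := dualRow_succ_eq_twist hi
  rw [hh₁, hh₂] at hdual₁ hdual₂
  refine ⟨⟨getD_dualList E hi, getD_dualList E (by lia), ?_, ?_, ?_, ?_, ?_⟩, ?_⟩
  · rw [hdual₂, twist_dual_hat]
  · rw [hdual₂, twist_dual_hat]
  · rw [hdual₁, twist_dual_hat]
  · rw [hdual₁, twist_dual_hat]
  · rw [hdual₁, hdual₂]
    exact unionIntersectable_twist_dual_hat _ hη hC₁ hC₂
  · have ha : Even ((E[i]'(Nat.lt_of_succ_lt hi)).a + E[i + 1].a - (hat A B' η).a) :=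
      ⟨0, by rw [hh₁, hh₂]; simp only [hat, a]; ring⟩
    have hb : Even ((E[i]'(Nat.lt_of_succ_lt hi)).b + E[i + 1].b - (hat A B' η).b) :=
      ⟨B, by rw [hh₁, hh₂]; simp only [hat, b]; ring⟩
    rw [hdual₁, hdual₂, unionIntersection_twist_dual_hat, ← dualList_replace_pair hi ha hb,
      dualList_dualList]

/-- Merging hats (Lemma `merge`): suppose the `B`-coordinates of `E` are
nondecreasing and that `r_i = h₁ = (A, −B, B, η)` and
`r_{i+1} = h₂ = (A', −B', B', η')` are consecutive hats with `B' ≥ 0`,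
`C(h₁) ≥ 1`, `C(h₂) ≥ 1`, `A' = B − 1`, satisfying the alternating sign
condition `η' = (−1)^{C(h₁)} η`.  Then:
(a) in `dual(E)` the rows `r̂_{i+1}` and `r̂_i` are consecutive (in that
order), both have `l = 0`, their supports are `[B', A']` and `[B, A]`
respectively, and the union-intersection of type 3' is applicable to this pair;
(b) applying this union-intersection to `dual(E)` and dualizing the result
yields exactly the sequence obtained from `E` by replacing the pair `(h₁, h₂)`
with the single hat `h = (A, −B', B', η)`, every other row being unchanged. -/
theorem merge_hats (E : List Row) (hE : ∀ r ∈ E, IsRow r)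
    (hmono : E.Pairwise fun r s => r.B ≤ s.B)
    (i : ℕ) (hi : i + 1 < E.length)
    (A B A' B' η η' : ℤ)
    (hh₁ : E.get ⟨i, by omega⟩ = ⟨A, -B, B, η⟩)
    (hh₂ : E.get ⟨i + 1, hi⟩ = ⟨A', -B', B', η'⟩)
    (hB' : 0 ≤ B')
    (hC₁ : 1 ≤ Row.C ⟨A, -B, B, η⟩)
    (hC₂ : 1 ≤ Row.C ⟨A', -B', B', η'⟩)
    (hadj : A' = B - 1)
    (halt : η' = epow (Row.C ⟨A, -B, B, η⟩) * η) :
    -- (a)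
    ((dualList E).getD (E.length - i - 2) default = dualRow E (i + 1) ∧
     (dualList E).getD (E.length - i - 1) default = dualRow E i ∧
     (dualRow E (i + 1)).l = 0 ∧ (dualRow E i).l = 0 ∧
     (dualRow E (i + 1)).B = B' ∧ (dualRow E (i + 1)).A = A' ∧
     (dualRow E i).B = B ∧ (dualRow E i).A = A ∧
     (dualRow E (i + 1)).A < (dualRow E i).A ∧
     (dualRow E (i + 1)).B < (dualRow E i).B ∧
     epow ((dualRow E (i + 1)).A - (dualRow E (i + 1)).B) *
       (dualRow E (i + 1)).eta * (dualRow E i).eta = -1 ∧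
     (dualRow E i).B = (dualRow E (i + 1)).A + 1) ∧
    -- (b)
    (dualList
        ((dualList E).take (E.length - i - 2) ++
          [(⟨(dualRow E i).A, (dualRow E (i + 1)).B, 0,
              (dualRow E (i + 1)).eta⟩ : Row)] ++
          (dualList E).drop (E.length - i)) =
      E.take i ++ [(⟨A, -B', B', η⟩ : Row)] ++ E.drop (i + 2)) := by
  obtain ⟨⟨hget₂, hget₁, hB₂, hA₂, hB₁, hA₁, hUI⟩, hmerge⟩ :=
    merge_hats_general E i hi A B A' B' η η' hh₁ hh₂ (hh₁ ▸ hE _ (E.get_mem _)).2 hC₁ hC₂ hadj halt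
  exact ⟨⟨hget₂, hget₁, hUI.l_left, hUI.l_right, hB₂, hA₂, hB₁, hA₁, hUI.A_lt, hUI.B_lt, hUI.sign,
    hUI.adjacent⟩, hmerge⟩
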